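/- Let Φ be an irreducible reduced root system and λ a dominant weight that is not minuscule. Then there exists an irreducible subset I of the simple-root index set such that λ − θ_I is a dominant weight, where θ_I is the highest short root of the subsystem Φ_I (with the G₂ exception where one may also use α₁+α₂). Consequently λ covers some dominant weight. -/

import Mathlib

open scoped RealInnerProductSpace

noncomputable section

variable {E : Type*} [NormedAddCommGroup E] [InnerProductSpace ℝ E]

/-- The pairing `⟨x, α∨⟩ = 2(x,α)/(α,α)`. -/
def cpair (x α : E) : ℝ := 2 * ⟪x, α⟫ / ⟪α, α⟫

/-- Reflection in the hyperplane orthogonal to `α`. -/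
def wrefl (α x : E) : E := x - cpair x α • α

/-- An irreducible reduced root system with a chosen base `simple : Fin ℓ → E`. -/
structure RootSystemData (ℓ : ℕ) (E : Type*) [NormedAddCommGroup E]
    [InnerProductSpace ℝ E] where
  roots : Finset E
  simple : Fin ℓ → E
  simple_mem : ∀ i, simple i ∈ roots
  root_ne_zero : ∀ α ∈ roots, α ≠ 0
  reduced : ∀ α ∈ roots, (2 : ℝ) • α ∉ roots
  cpair_int : ∀ α ∈ roots, ∀ β ∈ roots, ∃ n : ℤ, cpair β α = (n : ℝ)
  reflect_mem : ∀ α ∈ roots, ∀ β ∈ roots, wrefl α β ∈ roots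
  simple_indep : LinearIndependent ℝ simple
  root_decomp : ∀ α ∈ roots,
    (∃ c : Fin ℓ → ℕ, α = ∑ i, (c i : ℝ) • simple i) ∨
    (∃ c : Fin ℓ → ℕ, α = -∑ i, (c i : ℝ) • simple i)
  irred : ∀ S : Finset (Fin ℓ), S.Nonempty →
    (∀ i ∈ S, ∀ j ∉ S, ⟪simple i, simple j⟫ = 0) → S = Finset.univ

namespace RootSystemData

variable {ℓ : ℕ} (R : RootSystemData ℓ E)

/-- Integral weights. -/
def IsIntegral (x : E) : Prop := ∀ α ∈ R.roots, ∃ n : ℤ, cpair x α = (n : ℝ)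

/-- Dominant (integral) weights. -/
def IsDominant (x : E) : Prop :=
  R.IsIntegral x ∧ ∀ i, 0 ≤ cpair x (R.simple i)

/-- The dominant order: `R.wle μ λ` means `μ ≤ λ`, i.e. `λ - μ` is a nonnegative
integer combination of the simple roots. -/
def wle (μ lam : E) : Prop :=
  ∃ c : Fin ℓ → ℕ, lam - μ = ∑ i, (c i : ℝ) • R.simple i

/-- Minuscule weights: nonzero dominant weights all of whose pairings with roots
lie in `{0, 1, -1}`. -/
def IsMinuscule (x : E) : Prop :=
  R.IsDominant x ∧ x ≠ 0 ∧
  ∀ α ∈ R.roots, cpair x α = 0 ∨ cpair x α = 1 ∨ cpair x α = -1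

/-- `y` lies in the Weyl group orbit of `x`. -/
def InWeylOrbit (x y : E) : Prop :=
  ∃ l : List E, (∀ α ∈ l, α ∈ R.roots) ∧ y = l.foldr wrefl x

/-- `R.IsDualOf μ λ` expresses `μ = -w₀ λ`: `μ` is the dominant element of the
Weyl orbit of `-λ`. -/
def IsDualOf (μ lam : E) : Prop := R.IsDominant μ ∧ R.InWeylOrbit (-lam) μ

/-- Low triples of dominant weights. -/
def LowTriple (lam mu nu : E) : Prop :=
  R.IsDominant lam ∧ R.IsDominant mu ∧ R.IsDominant nu ∧
  (∀ lam' mu' : E, R.IsDominant lam' → R.IsDominant mu' →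
    R.wle lam' lam → R.wle mu' mu → R.wle nu (lam' + mu') → lam' = lam ∧ mu' = mu) ∧
  R.wle (nu + ∑ i, R.simple i) (lam + mu)

/-- Covering relation in the poset of dominant weights. -/
def Covers (lam mu : E) : Prop :=
  R.IsDominant lam ∧ R.IsDominant mu ∧ R.wle mu lam ∧ mu ≠ lam ∧
  ∀ η, R.IsDominant η → R.wle mu η → R.wle η lam → η = mu ∨ η = lam

/-- A root of the subsystem `Φ_I` generated by the simple roots indexed by `I`. -/
def IsRootOf (I : Finset (Fin ℓ)) (β : E) : Prop :=
  β ∈ R.roots ∧ ∃ c : Fin ℓ → ℤ, (∀ i, c i ≠ 0 → i ∈ I) ∧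
    β = ∑ i, (c i : ℝ) • R.simple i

/-- A short root of `Φ_I`. -/
def IsShortRootOf (I : Finset (Fin ℓ)) (β : E) : Prop :=
  R.IsRootOf I β ∧ ∀ γ, R.IsRootOf I γ → ⟪β, β⟫ ≤ ⟪γ, γ⟫

/-- `θ` is the highest short root of `Φ_I`. -/
def IsHighestShortRoot (I : Finset (Fin ℓ)) (θ : E) : Prop :=
  R.IsShortRootOf I θ ∧ ∀ γ, R.IsShortRootOf I γ → R.wle γ θ

/-- `I` indexes a connected (i.e. irreducible) subdiagram of the Dynkin diagram. -/
def Connected (I : Finset (Fin ℓ)) : Prop :=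
  I.Nonempty ∧ ∀ S ⊆ I, S.Nonempty →
    (∀ i ∈ S, ∀ j ∈ I, j ∉ S → ⟪R.simple i, R.simple j⟫ = 0) → S = I

/-- `I` is of type A: the Cartan matrix of `Φ_I` is that of a type `A` chain. -/
def IsTypeASub (I : Finset (Fin ℓ)) : Prop :=
  ∃ e : Fin I.card ≃ {i // i ∈ I}, ∀ a b : Fin I.card,
    cpair (R.simple (e b).1) (R.simple (e a).1) =
      if a = b then 2
      else if (a : ℕ) + 1 = (b : ℕ) ∨ (b : ℕ) + 1 = (a : ℕ) then -1 else 0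

/-- The subdiagram indexed by `I` is simply laced. -/
def SimplyLaced (I : Finset (Fin ℓ)) : Prop :=
  ∀ i ∈ I, ∀ j ∈ I, i ≠ j →
    cpair (R.simple i) (R.simple j) = 0 ∨ cpair (R.simple i) (R.simple j) = -1

end RootSystemData

variable {ℓ : ℕ}

/-!
Let `λ` be dominant and not minuscule, so `⟨λ, α∨⟩ ≥ 2` for some positive root `α`; then
`|λ - α| < |λ|`. Starting from `λ - α`, add back a simple root on which the current weight is
negative: this never increases the norm, and because `λ` is dominant it stays below `λ`. The
process ends at a dominant weight, which is not `λ` because its norm is too small. Hence `λ` covers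
something.

Now let `λ` cover `μ`, as in Stembridge's covering theorem. Then `μ + γ` cannot be dominant for any
`γ` strictly between `0` and `λ - μ`. Growing a root from a shortest simple root `α_k` of the
support of `λ - μ`, using only simple roots orthogonal to `μ`, produces some `γ` with `μ + γ`
dominant, so `λ - μ = γ` is a short root. If `γ` is dominant on its support, it is the highest short
root there. Otherwise `γ` is negative on `α_k`, which then is the only shortest simple root of the
support and has coefficient one in `γ`; the equation `⟨γ, α_k∨⟩ = -1` forces a triple bond, that is,
type `G₂`.
-/

theorem cpair_mul_inner_self {α : E} (hα : α ≠ 0) (x : E) :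
    cpair x α * ⟪α, α⟫ = 2 * ⟪x, α⟫ :=
  div_mul_cancel₀ _ (inner_self_ne_zero.2 hα)

theorem cpair_add (x y α : E) : cpair (x + y) α = cpair x α + cpair y α := by
  rw [cpair, cpair, cpair, inner_add_left, mul_add, add_div]

theorem cpair_neg (x α : E) : cpair (-x) α = -cpair x α := by
  rw [cpair, cpair, inner_neg_left, mul_neg, neg_div]

theorem cpair_neg_right (x α : E) : cpair x (-α) = -cpair x α := by
  rw [cpair, cpair, inner_neg_right, inner_neg_neg, mul_neg, neg_div]

theorem cpair_self {α : E} (hα : α ≠ 0) : cpair α α = 2 :=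
  mul_div_cancel_right₀ 2 (inner_self_ne_zero.2 hα)

theorem inner_wrefl_wrefl (α x : E) : ⟪wrefl α x, wrefl α x⟫ = ⟪x, x⟫ := by
  obtain rfl | hα := eq_or_ne α 0
  · simp only [wrefl, smul_zero, sub_zero]
  · rw [wrefl, real_inner_sub_sub_self, real_inner_smul_right, real_inner_smul_left,
      real_inner_smul_right]
    linear_combination cpair x α * cpair_mul_inner_self hα x

theorem exists_eq_neg_three_of_sum_eq_neg_three {ι : Type*} {s : Finset ι} {f : ι → ℤ}
    (hf : ∀ i ∈ s, f i = 0 ∨ f i ≤ -2) (hsum : ∑ i ∈ s, f i = -3) : ∃ i ∈ s, f i = -3 := by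
  classical
  obtain ⟨i, hi, hi0⟩ := Finset.exists_ne_zero_of_sum_ne_zero (by omega : ∑ i ∈ s, f i ≠ 0)
  have hrest : ∑ j ∈ s.erase i, f j = 0 ∨ ∑ j ∈ s.erase i, f j ≤ -2 :=
    Finset.sum_induction f (fun m => m = 0 ∨ m ≤ -2) (fun _ _ _ _ => by omega) (.inl rfl)
      fun j hj => hf j (Finset.mem_of_mem_erase hj)
  have hfi := hf i hi
  rw [← Finset.add_sum_erase _ _ hi] at hsum
  exact ⟨i, hi, by omega⟩

theorem exists_eq_one_and_eq_neg_three_of_sum_mul {ι : Type*} {s : Finset ι} {b n : ι → ℤ}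
    (hb : ∀ i ∈ s, 0 ≤ b i) (hn : ∀ i ∈ s, b i ≠ 0 → n i = 0 ∨ n i ≤ -2)
    (hsum : ∑ i ∈ s, b i * n i = -3) : ∃ i ∈ s, b i = 1 ∧ n i = -3 := by
  have hterm (i : ι) (hi : i ∈ s) : b i * n i = 0 ∨ b i * n i ≤ -2 := by
    by_cases hbi : b i = 0
    · exact .inl (by rw [hbi, zero_mul])
    · rcases hn i hi hbi with h0 | h2
      · exact .inl (by rw [h0, mul_zero])
      · exact .inr (by nlinarith [(hb i hi).lt_of_ne' hbi])
  obtain ⟨i, hi, hprod⟩ := exists_eq_neg_three_of_sum_eq_neg_three hterm hsum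
  have hbi : b i ≠ 0 := fun h0 => by simp [h0] at hprod
  have hni : n i ≤ -2 := (hn i hi hbi).resolve_left fun h0 => by simp [h0] at hprod
  have hbi_pos := (hb i hi).lt_of_ne' hbi
  have hbi_one : b i = 1 := by nlinarith
  rw [hbi_one, one_mul] at hprod
  exact ⟨i, hi, hbi_one, hprod⟩

namespace RootSystemData

variable {R : RootSystemData ℓ E}

theorem inner_self_pos {α : E} (hα : α ∈ R.roots) : 0 < ⟪α, α⟫ :=
  real_inner_self_pos.2 (R.root_ne_zero α hα)

theorem neg_mem_roots {α : E} (hα : α ∈ R.roots) : -α ∈ R.roots := by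
  simpa only [wrefl, cpair_self (R.root_ne_zero α hα), two_smul, sub_add_cancel_left]
    using R.reflect_mem α hα α hα

theorem cpair_nonneg_iff {α : E} (hα : α ∈ R.roots) (x : E) : 0 ≤ cpair x α ↔ 0 ≤ ⟪x, α⟫ := by
  rw [← mul_nonneg_iff_of_pos_right (inner_self_pos hα),
    cpair_mul_inner_self (R.root_ne_zero α hα), mul_nonneg_iff_of_pos_left two_pos]

theorem isDominant_iff {x : E} :
    R.IsDominant x ↔ R.IsIntegral x ∧ ∀ i, 0 ≤ ⟪x, R.simple i⟫ :=
  and_congr_right fun _ => forall_congr' fun i => cpair_nonneg_iff (R.simple_mem i) x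

theorem IsDominant.inner_simple_nonneg {x : E} (hx : R.IsDominant x) (i : Fin ℓ) :
    0 ≤ ⟪x, R.simple i⟫ :=
  (isDominant_iff.1 hx).2 i

variable (R) in
/-- The lattice of integral weights, as a subgroup of the ambient space. -/
def weightLattice : AddSubgroup E where
  carrier := {x | R.IsIntegral x}
  zero_mem' _ _ := ⟨0, by rw [cpair, inner_zero_left, mul_zero, zero_div, Int.cast_zero]⟩
  add_mem' hx hy α hα := by
    obtain ⟨m, hm⟩ := hx α hα
    obtain ⟨n, hn⟩ := hy α hα
    exact ⟨m + n, by rw [cpair_add, hm, hn, Int.cast_add]⟩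
  neg_mem' hx α hα := by
    obtain ⟨m, hm⟩ := hx α hα
    exact ⟨-m, by rw [cpair_neg, hm, Int.cast_neg]⟩

theorem mem_weightLattice_of_mem_roots {α : E} (hα : α ∈ R.roots) : α ∈ R.weightLattice :=
  fun β hβ => R.cpair_int β hβ α hα

theorem inner_self_le_two_mul_inner {x α : E} (hx : x ∈ R.weightLattice) (hα : α ∈ R.roots)
    (hpos : 0 < ⟪x, α⟫) : ⟪α, α⟫ ≤ 2 * ⟪x, α⟫ := by
  obtain ⟨n, hn⟩ := hx α hα
  have hα0 := inner_self_pos hα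
  have hmul := cpair_mul_inner_self (R.root_ne_zero α hα) x
  have hn0 : (0 : ℝ) < n := by rw [← hn]; exact div_pos (by linarith) hα0
  have hn1 : (1 : ℝ) ≤ n := by exact_mod_cast hn0
  rw [hn] at hmul
  nlinarith

theorem cpair_eq_one {α β : E} (hα : α ∈ R.roots) (hβ : β ∈ R.roots)
    (hle : ⟪β, β⟫ ≤ ⟪α, α⟫) (hne : β ≠ α) (hpos : 0 < ⟪β, α⟫) : cpair β α = 1 := by
  obtain ⟨n, hn⟩ := R.cpair_int α hα β hβ
  have hα0 := inner_self_pos hα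
  have hmul := cpair_mul_inner_self (R.root_ne_zero α hα) β
  have hdist := real_inner_self_pos.2 (sub_ne_zero.2 hne)
  rw [real_inner_sub_sub_self] at hdist
  rw [hn] at hmul ⊢
  have hn0 : (0 : ℝ) < n := by by_contra! h; nlinarith
  have hn2 : (n : ℝ) < 2 := by by_contra! h; nlinarith
  have hn1 : n = 1 := by
    have : 0 < n := by exact_mod_cast hn0
    have : n < 2 := by exact_mod_cast hn2
    omega
  rw [hn1, Int.cast_one]

theorem cpair_eq_neg_one {α β : E} (hα : α ∈ R.roots) (hβ : β ∈ R.roots)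
    (hle : ⟪β, β⟫ ≤ ⟪α, α⟫) (hne : β ≠ -α) (hneg : ⟪β, α⟫ < 0) : cpair β α = -1 := by
  rw [← neg_eq_iff_eq_neg, ← cpair_neg]
  exact cpair_eq_one hα (neg_mem_roots hβ) (by rwa [inner_neg_neg])
    (fun h => hne (neg_eq_iff_eq_neg.1 h)) (by rwa [inner_neg_left, neg_pos])

theorem sub_mem_roots {α β : E} (hα : α ∈ R.roots) (hβ : β ∈ R.roots)
    (hle : ⟪β, β⟫ ≤ ⟪α, α⟫) (hne : β ≠ α) (hpos : 0 < ⟪β, α⟫) :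
    β - α ∈ R.roots ∧ ⟪β - α, β - α⟫ = ⟪β, β⟫ := by
  have hrefl : wrefl α β = β - α := by rw [wrefl, cpair_eq_one hα hβ hle hne hpos, one_smul]
  exact hrefl ▸ ⟨R.reflect_mem α hα β hβ, inner_wrefl_wrefl α β⟩

theorem add_mem_roots {α β : E} (hα : α ∈ R.roots) (hβ : β ∈ R.roots)
    (hle : ⟪β, β⟫ ≤ ⟪α, α⟫) (hne : β ≠ -α) (hneg : ⟪β, α⟫ < 0) :
    β + α ∈ R.roots ∧ ⟪β + α, β + α⟫ = ⟪β, β⟫ := by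
  simpa only [sub_neg_eq_add] using sub_mem_roots (neg_mem_roots hα) hβ (by rwa [inner_neg_neg])
    hne (by rwa [inner_neg_right, neg_pos])

/-! ### Coordinates in the base -/

variable (R) in
/-- The element of the root lattice with the given coordinates in the base of simple roots. The
componentwise order on coordinates corresponds to the dominant order. -/
def ofCoords : (Fin ℓ → ℤ) →ₗ[ℤ] E := Fintype.linearCombination ℤ R.simple

theorem ofCoords_apply (c : Fin ℓ → ℤ) : R.ofCoords c = ∑ i, (c i : ℝ) • R.simple i := by
  simp only [ofCoords, Fintype.linearCombination_apply, Int.cast_smul_eq_zsmul]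

theorem ofCoords_single (i : Fin ℓ) : R.ofCoords (Pi.single i 1) = R.simple i := by
  rw [ofCoords, Fintype.linearCombination_apply_single, one_smul]

variable (R) in
theorem ofCoords_injective : Function.Injective R.ofCoords :=
  linearIndependent_iff_injective_fintypeLinearCombination.1
    (R.simple_indep.restrict_scalars' ℤ)

theorem ofCoords_eq_zero_iff {c : Fin ℓ → ℤ} : R.ofCoords c = 0 ↔ c = 0 :=
  map_eq_zero_iff R.ofCoords R.ofCoords_injective

theorem ofCoords_mem_weightLattice (c : Fin ℓ → ℤ) : R.ofCoords c ∈ R.weightLattice := by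
  rw [ofCoords, Fintype.linearCombination_apply]
  exact sum_mem fun i _ => zsmul_mem (mem_weightLattice_of_mem_roots (R.simple_mem i)) _

theorem wle_iff {μ lam : E} : R.wle μ lam ↔ ∃ c, 0 ≤ c ∧ lam - μ = R.ofCoords c := by
  constructor
  · rintro ⟨c, hc⟩
    refine ⟨fun i => c i, fun i => Int.natCast_nonneg _, ?_⟩
    simpa only [ofCoords_apply, Int.cast_natCast] using hc
  · rintro ⟨c, hc0, hc⟩
    lift c to Fin ℓ → ℕ using hc0
    exact ⟨c, by simpa only [ofCoords_apply, Int.cast_natCast] using hc⟩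

theorem wle_ofCoords_iff {b c : Fin ℓ → ℤ} : R.wle (R.ofCoords c) (R.ofCoords b) ↔ c ≤ b := by
  rw [wle_iff, ← map_sub]
  constructor
  · rintro ⟨d, hd0, hd⟩
    rwa [← sub_nonneg, R.ofCoords_injective hd]
  · exact fun h => ⟨b - c, sub_nonneg.2 h, rfl⟩

theorem exists_ofCoords_eq {α : E} (hα : α ∈ R.roots) :
    ∃ c, R.ofCoords c = α ∧ (0 ≤ c ∨ c ≤ 0) := by
  rcases R.root_decomp α hα with ⟨c, hc⟩ | ⟨c, hc⟩
  · refine ⟨fun i => c i, ?_, .inl fun i => Int.natCast_nonneg _⟩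
    simp only [hc, ofCoords_apply, Int.cast_natCast]
  · refine ⟨-fun i => (c i : ℤ), ?_, .inr (neg_nonpos.2 fun i => Int.natCast_nonneg _)⟩
    simp only [hc, map_neg, ofCoords_apply, Int.cast_natCast]

theorem nonneg_or_nonpos_of_ofCoords_mem_roots {c : Fin ℓ → ℤ} (hc : R.ofCoords c ∈ R.roots) :
    0 ≤ c ∨ c ≤ 0 := by
  obtain ⟨d, hd, hsign⟩ := exists_ofCoords_eq hc
  rwa [R.ofCoords_injective hd] at hsign

/-- The indices of the nonzero coordinates. -/
def supp (c : Fin ℓ → ℤ) : Finset (Fin ℓ) := {i | c i ≠ 0}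

theorem mem_supp {c : Fin ℓ → ℤ} {i : Fin ℓ} : i ∈ supp c ↔ c i ≠ 0 := by
  rw [supp, Finset.mem_filter_univ]

theorem single_le_of_mem_supp {c : Fin ℓ → ℤ} (hc : 0 ≤ c) {j : Fin ℓ} (hj : j ∈ supp c) :
    Pi.single j 1 ≤ c := by
  intro i
  obtain rfl | hij := eq_or_ne i j
  · rw [Pi.single_eq_same]
    exact (hc i).lt_of_ne' (mem_supp.1 hj)
  · rw [Pi.single_eq_of_ne hij]
    exact hc i

theorem inner_ofCoords (c : Fin ℓ → ℤ) (x : E) :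
    ⟪R.ofCoords c, x⟫ = ∑ i, (c i : ℝ) * ⟪R.simple i, x⟫ := by
  simp only [ofCoords_apply, sum_inner, real_inner_smul_left]

theorem cpair_ofCoords (c : Fin ℓ → ℤ) (x : E) :
    cpair (R.ofCoords c) x = ∑ i, (c i : ℝ) * cpair (R.simple i) x := by
  rw [cpair, inner_ofCoords, Finset.mul_sum, Finset.sum_div]
  exact Finset.sum_congr rfl fun i _ => by rw [cpair]; ring

theorem inner_ofCoords_nonneg {c : Fin ℓ → ℤ} (hc : 0 ≤ c) {x : E}
    (hx : ∀ i ∈ supp c, 0 ≤ ⟪x, R.simple i⟫) : 0 ≤ ⟪x, R.ofCoords c⟫ := by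
  rw [real_inner_comm, inner_ofCoords]
  refine Finset.sum_nonneg fun i _ => ?_
  rw [real_inner_comm]
  obtain hi | hi := eq_or_ne (c i) 0
  · rw [hi, Int.cast_zero, zero_mul]
  · exact mul_nonneg (Int.cast_nonneg (hc i)) (hx i (mem_supp.2 hi))

theorem inner_simple_nonpos {i j : Fin ℓ} (hij : i ≠ j) : ⟪R.simple i, R.simple j⟫ ≤ 0 := by
  obtain ⟨n, hn⟩ := R.cpair_int _ (R.simple_mem j) _ (R.simple_mem i)
  have hrefl : wrefl (R.simple j) (R.simple i) =
      R.ofCoords (Pi.single i 1 - n • Pi.single j 1) := by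
    rw [map_sub, map_smul, ofCoords_single, ofCoords_single, wrefl, hn, Int.cast_smul_eq_zsmul]
  have hmem := R.reflect_mem _ (R.simple_mem j) _ (R.simple_mem i)
  rw [hrefl] at hmem
  have hn0 : n ≤ 0 := by
    rcases nonneg_or_nonpos_of_ofCoords_mem_roots hmem with h | h
    · simpa [hij.symm] using h j
    · simpa [hij] using h i
  have hmul := cpair_mul_inner_self (R.root_ne_zero _ (R.simple_mem j)) (R.simple i)
  have hcpair : cpair (R.simple i) (R.simple j) ≤ 0 := by rw [hn]; exact_mod_cast hn0
  nlinarith [inner_self_pos (R.simple_mem j)]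

theorem inner_ofCoords_simple_anti {b c : Fin ℓ → ℤ} (hcb : c ≤ b) {j : Fin ℓ}
    (hj : c j = b j) : ⟪R.ofCoords b, R.simple j⟫ ≤ ⟪R.ofCoords c, R.simple j⟫ := by
  rw [inner_ofCoords, inner_ofCoords]
  refine Finset.sum_le_sum fun i _ => ?_
  obtain rfl | hij := eq_or_ne i j
  · rw [hj]
  · exact mul_le_mul_of_nonpos_right (Int.cast_le.2 (hcb i)) (inner_simple_nonpos hij)

theorem ofCoords_ne_neg_simple {c : Fin ℓ → ℤ} (hc : 0 ≤ c) (j : Fin ℓ) :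
    R.ofCoords c ≠ -R.simple j := by
  rw [← ofCoords_single, ← map_neg]
  intro h
  have hcj := hc j
  rw [R.ofCoords_injective h] at hcj
  simp at hcj

theorem exists_inner_simple_pos {c : Fin ℓ → ℤ} (hc0 : 0 ≤ c) (hc : c ≠ 0) :
    ∃ j ∈ supp c, 0 < ⟪R.ofCoords c, R.simple j⟫ := by
  by_contra! h
  have hneg : 0 ≤ ⟪-R.ofCoords c, R.ofCoords c⟫ :=
    inner_ofCoords_nonneg hc0 fun i hi => by
      rw [inner_neg_left]
      exact neg_nonneg.2 (h i hi)
  rw [inner_neg_left, neg_nonneg] at hneg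
  exact hneg.not_gt (real_inner_self_pos.2 (mt ofCoords_eq_zero_iff.1 hc))

/-! ### Dominant weights below a non-minuscule weight -/

theorem exists_isDominant_sub_inner_self_le {lam : E} (hlam : R.IsDominant lam)
    {b : Fin ℓ → ℤ} (hb : 0 ≤ b) :
    ∃ c, 0 ≤ c ∧ R.IsDominant (lam - R.ofCoords c) ∧
      ⟪lam - R.ofCoords c, lam - R.ofCoords c⟫ ≤ ⟪lam - R.ofCoords b, lam - R.ofCoords b⟫ := by
  let S : Set (Fin ℓ → ℤ) := {c | c ∈ Set.Icc 0 b ∧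
    ⟪lam - R.ofCoords c, lam - R.ofCoords c⟫ ≤ ⟪lam - R.ofCoords b, lam - R.ofCoords b⟫}
  have hS : S.Finite := (Set.finite_Icc 0 b).subset fun c hc => hc.1
  obtain ⟨c, ⟨⟨hc0, hcb⟩, hcnorm⟩, hmin⟩ := hS.exists_minimal ⟨b, ⟨hb, le_rfl⟩, le_rfl⟩
  have hint : lam - R.ofCoords c ∈ R.weightLattice :=
    sub_mem hlam.1 (ofCoords_mem_weightLattice c)
  refine ⟨c, hc0, isDominant_iff.2 ⟨hint, fun i => ?_⟩, hcnorm⟩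
  by_contra! hneg
  have hci : c i ≠ 0 := fun hci => by
    have hanti := inner_ofCoords_simple_anti (R := R) hc0 hci.symm
    rw [map_zero, inner_zero_left] at hanti
    rw [inner_sub_left] at hneg
    linarith [hlam.inner_simple_nonneg i]
  have hstep : ⟪R.simple i, R.simple i⟫ ≤ 2 * ⟪-(lam - R.ofCoords c), R.simple i⟫ :=
    inner_self_le_two_mul_inner (neg_mem hint) (R.simple_mem i) (by rwa [inner_neg_left, neg_pos])
  have hpred : c - Pi.single i 1 ∈ S := by
    refine ⟨⟨?_, (sub_le_self c (Pi.single_nonneg.2 zero_le_one)).trans hcb⟩, le_trans ?_ hcnorm⟩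
    · exact sub_nonneg.2 (single_le_of_mem_supp hc0 (mem_supp.2 hci))
    · rw [map_sub, ofCoords_single, ← sub_add, real_inner_add_add_self]
      rw [inner_neg_left] at hstep
      linarith
  have hle := hmin hpred (sub_le_self c (Pi.single_nonneg.2 zero_le_one)) i
  simp at hle

theorem exists_two_le_cpair {lam : E} (hlam : R.IsDominant lam) (hne : lam ≠ 0)
    (hnm : ¬ R.IsMinuscule lam) :
    ∃ c, 0 ≤ c ∧ R.ofCoords c ∈ R.roots ∧ 2 ≤ cpair lam (R.ofCoords c) := by
  obtain ⟨α, hα, hpair⟩ :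
      ∃ α ∈ R.roots, ¬ (cpair lam α = 0 ∨ cpair lam α = 1 ∨ cpair lam α = -1) := by
    by_contra! h
    exact hnm ⟨hlam, hne, h⟩
  have hpos : ∀ c, 0 ≤ c → R.ofCoords c ∈ R.roots →
      cpair lam (R.ofCoords c) = 0 ∨ cpair lam (R.ofCoords c) = 1 ∨
        2 ≤ cpair lam (R.ofCoords c) := by
    intro c hc0 hc
    obtain ⟨n, hn⟩ := hlam.1 _ hc
    have hn0 := (cpair_nonneg_iff hc lam).2
      (inner_ofCoords_nonneg hc0 fun i _ => hlam.inner_simple_nonneg i)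
    rw [hn] at hn0 ⊢
    norm_cast at hn0 ⊢
    omega
  obtain ⟨c, rfl, hc0 | hc0⟩ := exists_ofCoords_eq hα
  · have hc := hpos c hc0 hα
    exact ⟨c, hc0, hα, by tauto⟩
  · have hnegα : R.ofCoords (-c) ∈ R.roots := by rw [map_neg]; exact neg_mem_roots hα
    have hflip : cpair lam (R.ofCoords (-c)) = -cpair lam (R.ofCoords c) := by
      rw [map_neg, cpair_neg_right]
    have hc := hpos (-c) (neg_nonneg.2 hc0) hnegα
    rw [hflip, neg_eq_zero, neg_eq_iff_eq_neg] at hc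
    exact ⟨-c, neg_nonneg.2 hc0, hnegα, by rw [hflip]; tauto⟩

theorem exists_isDominant_sub {lam : E} (hlam : R.IsDominant lam) (hne : lam ≠ 0)
    (hnm : ¬ R.IsMinuscule lam) : ∃ c, 0 < c ∧ R.IsDominant (lam - R.ofCoords c) := by
  obtain ⟨a, ha0, ha, htwo⟩ := exists_two_le_cpair hlam hne hnm
  obtain ⟨c, hc0, hcdom, hcnorm⟩ := exists_isDominant_sub_inner_self_le hlam ha0
  refine ⟨c, lt_of_le_of_ne hc0 ?_, hcdom⟩
  rintro rfl
  have hmul := cpair_mul_inner_self (R.root_ne_zero _ ha) lam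
  rw [map_zero, sub_zero, real_inner_sub_sub_self] at hcnorm
  nlinarith [inner_self_pos ha]

/-! ### Coverings -/

theorem exists_covers {lam : E} (hlam : R.IsDominant lam) {b : Fin ℓ → ℤ} (hb : 0 < b)
    (hdom : R.IsDominant (lam - R.ofCoords b)) : ∃ μ, R.Covers lam μ := by
  let S : Set (Fin ℓ → ℤ) := {c | c ∈ Set.Icc 0 b ∧ c ≠ 0 ∧ R.IsDominant (lam - R.ofCoords c)}
  have hS : S.Finite := (Set.finite_Icc 0 b).subset fun c hc => hc.1
  obtain ⟨c, ⟨⟨hc0, hcb⟩, hcne, hcdom⟩, hmin⟩ :=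
    hS.exists_minimal ⟨b, ⟨hb.le, le_rfl⟩, hb.ne', hdom⟩
  refine ⟨lam - R.ofCoords c, hlam, hcdom, wle_iff.2 ⟨c, hc0, sub_sub_cancel _ _⟩,
    fun h => hcne (ofCoords_eq_zero_iff.1 (sub_eq_self.1 h)), fun η hη hμη hηlam => ?_⟩
  obtain ⟨d, hd0, hd⟩ := wle_iff.1 hηlam
  obtain rfl : η = lam - R.ofCoords d := by rw [← hd, sub_sub_cancel]
  have hdc : d ≤ c := by
    obtain ⟨e, he0, he⟩ := wle_iff.1 hμη
    rw [sub_sub_sub_cancel_left, ← map_sub] at he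
    rwa [← sub_nonneg, R.ofCoords_injective he]
  obtain rfl | hdne := eq_or_ne d 0
  · exact .inr (by rw [map_zero, sub_zero])
  · exact .inl (by rw [hdc.antisymm (hmin ⟨⟨hd0, hdc.trans hcb⟩, hdne, hη⟩ hdc)])

theorem Covers.coords_pos {μ : E} {b : Fin ℓ → ℤ} (h : R.Covers (μ + R.ofCoords b) μ) : 0 < b := by
  obtain ⟨-, -, hle, hne, -⟩ := h
  obtain ⟨c, hc0, hc⟩ := wle_iff.1 hle
  rw [add_sub_cancel_left] at hc
  rw [R.ofCoords_injective hc]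
  refine lt_of_le_of_ne hc0 fun hc' => hne ?_
  rw [hc, ← hc', map_zero, add_zero]

theorem Covers.coords_eq_of_le {μ : E} {b c : Fin ℓ → ℤ} (h : R.Covers (μ + R.ofCoords b) μ)
    (hc0 : 0 ≤ c) (hcb : c ≤ b) (hc : c ≠ 0)
    (hdom : ∀ j, 0 ≤ ⟪μ + R.ofCoords c, R.simple j⟫) : c = b := by
  obtain ⟨-, hμ, -, -, hcover⟩ := h
  have hcdom : R.IsDominant (μ + R.ofCoords c) :=
    isDominant_iff.2 ⟨R.weightLattice.add_mem hμ.1 (ofCoords_mem_weightLattice c), hdom⟩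
  rcases hcover _ hcdom (wle_iff.2 ⟨c, hc0, add_sub_cancel_left _ _⟩)
    (wle_iff.2 ⟨b - c, sub_nonneg.2 hcb, by rw [add_sub_add_left_eq_sub, map_sub]⟩) with h | h
  · exact absurd (ofCoords_eq_zero_iff.1 (add_eq_left.1 h)) hc
  · exact R.ofCoords_injective (add_left_cancel h)

theorem Covers.inner_add_nonneg_of_apply_eq {μ : E} {b c : Fin ℓ → ℤ}
    (h : R.Covers (μ + R.ofCoords b) μ) (hcb : c ≤ b) {j : Fin ℓ} (hj : c j = b j) :
    0 ≤ ⟪μ + R.ofCoords c, R.simple j⟫ := by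
  have hlam := h.1.inner_simple_nonneg j
  have hanti := inner_ofCoords_simple_anti (R := R) hcb hj
  rw [inner_add_left] at hlam ⊢
  linarith

theorem Covers.connected_supp {μ : E} {b : Fin ℓ → ℤ} (h : R.Covers (μ + R.ofCoords b) μ) :
    R.Connected (supp b) := by
  have hb := h.coords_pos
  have exists_mem_supp : ∃ i, b i ≠ 0 := Function.ne_iff.1 hb.ne'
  refine ⟨exists_mem_supp.imp fun i => mem_supp.2, fun S hS hSne horth => ?_⟩
  let c : Fin ℓ → ℤ := fun i => if i ∈ S then b i else 0
  have hc_mem {i} (hi : i ∈ S) : c i = b i := if_pos hi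
  have hc_notMem {i} (hi : i ∉ S) : c i = 0 := if_neg hi
  have hc0 : 0 ≤ c := fun i => ite_nonneg (hb.le i) le_rfl
  have hcb : c ≤ b := fun i => by
    by_cases hi : i ∈ S
    · exact (hc_mem hi).le
    · exact (hc_notMem hi).trans_le (hb.le i)
  have hcne : c ≠ 0 := by
    obtain ⟨i, hi⟩ := hSne
    exact Function.ne_iff.2 ⟨i, (hc_mem hi).trans_ne (mem_supp.1 (hS hi))⟩
  have hcdom (j : Fin ℓ) : 0 ≤ ⟪μ + R.ofCoords c, R.simple j⟫ := by
    by_cases hj : c j = b j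
    · exact h.inner_add_nonneg_of_apply_eq hcb hj
    have hjS : j ∉ S := fun hjS => hj (hc_mem hjS)
    have hjb : j ∈ supp b := mem_supp.2 fun hjb => hj (by rw [hjb, hc_notMem hjS])
    have hinner : ⟪R.ofCoords c, R.simple j⟫ = 0 := by
      rw [inner_ofCoords]
      refine Finset.sum_eq_zero fun i _ => ?_
      by_cases hi : i ∈ S
      · rw [horth i hi j hjb hjS, mul_zero]
      · rw [hc_notMem hi, Int.cast_zero, zero_mul]
    rw [inner_add_left, hinner, add_zero]
    exact h.2.1.inner_simple_nonneg j
  have hcb_eq := h.coords_eq_of_le hc0 hcb hcne hcdom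
  refine hS.antisymm fun i hi => ?_
  by_contra hiS
  exact mem_supp.1 hi (hcb_eq ▸ hc_notMem hiS)

theorem exists_maximal_root_le {b : Fin ℓ → ℤ} (hb : 0 ≤ b) {k : Fin ℓ} (hk : k ∈ supp b)
    (hshort : ∀ j ∈ supp b, ⟪R.simple k, R.simple k⟫ ≤ ⟪R.simple j, R.simple j⟫)
    (J : Set (Fin ℓ)) :
    ∃ c, 0 ≤ c ∧ c ≤ b ∧ R.ofCoords c ∈ R.roots ∧
      ⟪R.ofCoords c, R.ofCoords c⟫ = ⟪R.simple k, R.simple k⟫ ∧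
      (∀ j ∉ J, c j = Pi.single (M := fun _ => ℤ) k 1 j) ∧
      ∀ j ∈ J, c j < b j → 0 ≤ ⟪R.ofCoords c, R.simple j⟫ := by
  let S : Set (Fin ℓ → ℤ) := {c | c ∈ Set.Icc 0 b ∧ R.ofCoords c ∈ R.roots ∧
    ⟪R.ofCoords c, R.ofCoords c⟫ = ⟪R.simple k, R.simple k⟫ ∧
    ∀ j ∉ J, c j = Pi.single (M := fun _ => ℤ) k 1 j}
  have hS : S.Finite := (Set.finite_Icc 0 b).subset fun c hc => hc.1
  have hkS : Pi.single k 1 ∈ S := by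
    refine ⟨⟨Pi.single_nonneg.2 zero_le_one, single_le_of_mem_supp hb hk⟩, ?_⟩
    rw [ofCoords_single]
    exact ⟨R.simple_mem k, rfl, fun _ _ => rfl⟩
  obtain ⟨c, ⟨⟨hc0, hcb⟩, hc, hcnorm, hcJ⟩, hmax⟩ := hS.exists_maximal ⟨_, hkS⟩
  refine ⟨c, hc0, hcb, hc, hcnorm, hcJ, fun j hj hlt => ?_⟩
  by_contra! hneg
  have hjb : j ∈ supp b := mem_supp.2 ((hc0 j).trans_lt hlt).ne'
  obtain ⟨hmem, hnorm⟩ := add_mem_roots (R.simple_mem j) hc (hcnorm.trans_le (hshort j hjb))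
    (ofCoords_ne_neg_simple hc0 j) hneg
  rw [← ofCoords_single, ← map_add] at hmem hnorm
  have hsucc : c + Pi.single j 1 ∈ S := by
    refine ⟨⟨add_nonneg hc0 (Pi.single_nonneg.2 zero_le_one), fun i => ?_⟩, hmem,
      hnorm.trans hcnorm, fun i hi => ?_⟩
    · obtain rfl | hij := eq_or_ne i j
      · simpa using hlt
      · simpa [hij] using hcb i
    · have hij : i ≠ j := fun h => hi (h ▸ hj)
      simpa [hij] using hcJ i hi
  have hle := hmax hsucc (le_add_of_nonneg_right (Pi.single_nonneg.2 zero_le_one)) j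
  simp at hle

theorem Covers.ofCoords_mem_roots {μ : E} {b : Fin ℓ → ℤ} (h : R.Covers (μ + R.ofCoords b) μ)
    {k : Fin ℓ} (hk : k ∈ supp b)
    (hshort : ∀ j ∈ supp b, ⟪R.simple k, R.simple k⟫ ≤ ⟪R.simple j, R.simple j⟫) :
    R.ofCoords b ∈ R.roots ∧ ⟪R.ofCoords b, R.ofCoords b⟫ = ⟪R.simple k, R.simple k⟫ ∧
      ∀ j, ⟪μ, R.simple j⟫ ≠ 0 → b j = Pi.single (M := fun _ => ℤ) k 1 j := by
  obtain ⟨c, hc0, hcb, hc, hcnorm, hcJ, hcmax⟩ :=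
    exists_maximal_root_le h.coords_pos.le hk hshort {j | ⟪μ, R.simple j⟫ = 0}
  have hcne : c ≠ 0 := mt ofCoords_eq_zero_iff.2 (R.root_ne_zero _ hc)
  have hcdom (j : Fin ℓ) : 0 ≤ ⟪μ + R.ofCoords c, R.simple j⟫ := by
    rcases (hcb j).eq_or_lt with hj | hj
    · exact h.inner_add_nonneg_of_apply_eq hcb hj
    have hμj := h.2.1.inner_simple_nonneg j
    rw [inner_add_left]
    by_cases hpos : 0 ≤ ⟪R.ofCoords c, R.simple j⟫
    · exact add_nonneg hμj hpos
    push Not at hpos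
    have hμj_ne : ⟪μ, R.simple j⟫ ≠ 0 := fun h0 => hpos.not_ge (hcmax j h0 hj)
    have hμ_ge : ⟪R.simple j, R.simple j⟫ ≤ 2 * ⟪μ, R.simple j⟫ :=
      inner_self_le_two_mul_inner h.2.1.1 (R.simple_mem j) (hμj.lt_of_ne' hμj_ne)
    have hjb : j ∈ supp b := mem_supp.2 ((hc0 j).trans_lt hj).ne'
    have hmul := cpair_mul_inner_self (R.root_ne_zero _ (R.simple_mem j)) (R.ofCoords c)
    rw [cpair_eq_neg_one (R.simple_mem j) hc (hcnorm.trans_le (hshort j hjb))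
      (ofCoords_ne_neg_simple hc0 j) hpos] at hmul
    linarith
  obtain rfl := h.coords_eq_of_le hc0 hcb hcne hcdom
  exact ⟨hc, hcnorm, hcJ⟩

/-! ### Highest short roots -/

theorem exists_inner_simple_self_le {c : Fin ℓ → ℤ} (hc0 : 0 ≤ c) (hc : R.ofCoords c ∈ R.roots) :
    ∃ j ∈ supp c, ⟪R.simple j, R.simple j⟫ ≤ ⟪R.ofCoords c, R.ofCoords c⟫ := by
  by_contra! hlt
  let S : Set (Fin ℓ → ℤ) := {d | d ∈ Set.Icc 0 c ∧ R.ofCoords d ∈ R.roots ∧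
    ⟪R.ofCoords d, R.ofCoords d⟫ = ⟪R.ofCoords c, R.ofCoords c⟫}
  have hS : S.Finite := (Set.finite_Icc 0 c).subset fun d hd => hd.1
  obtain ⟨d, ⟨⟨hd0, hdc⟩, hd, hdnorm⟩, hmin⟩ := hS.exists_minimal ⟨c, ⟨hc0, le_rfl⟩, hc, rfl⟩
  obtain ⟨j, hj, hpos⟩ :=
    exists_inner_simple_pos (R := R) hd0 (mt ofCoords_eq_zero_iff.2 (R.root_ne_zero _ hd))
  have hdj : 0 < d j := (hd0 j).lt_of_ne' (mem_supp.1 hj)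
  have hnorm_lt : ⟪R.ofCoords d, R.ofCoords d⟫ < ⟪R.simple j, R.simple j⟫ :=
    hdnorm.trans_lt (hlt j (mem_supp.2 (hdj.trans_le (hdc j)).ne'))
  obtain ⟨hmem, hnorm⟩ := sub_mem_roots (R.simple_mem j) hd hnorm_lt.le
    (fun h => hnorm_lt.ne (by rw [h])) hpos
  rw [← ofCoords_single, ← map_sub] at hmem hnorm
  have hle := hmin
    ⟨⟨sub_nonneg.2 (single_le_of_mem_supp hd0 hj),
      (sub_le_self d (Pi.single_nonneg.2 zero_le_one)).trans hdc⟩, hmem, hnorm.trans hdnorm⟩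
    (sub_le_self d (Pi.single_nonneg.2 zero_le_one)) j
  simp at hle

theorem le_of_inner_simple_nonneg {b c : Fin ℓ → ℤ} (hb0 : 0 ≤ b) (hb : R.ofCoords b ∈ R.roots)
    (hc0 : 0 ≤ c) (hc : R.ofCoords c ∈ R.roots) (hcb : supp c ⊆ supp b)
    (hnorm : ⟪R.ofCoords c, R.ofCoords c⟫ = ⟪R.ofCoords b, R.ofCoords b⟫)
    (hbdom : ∀ j ∈ supp b, 0 ≤ ⟪R.ofCoords b, R.simple j⟫)
    (hcdom : ∀ j ∈ supp b, 0 ≤ ⟪R.ofCoords c, R.simple j⟫) : c ≤ b := by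
  obtain heq | hne := eq_or_ne (R.ofCoords c) (R.ofCoords b)
  · exact (R.ofCoords_injective heq).le
  have hpos : 0 < ⟪R.ofCoords c, R.ofCoords b⟫ := by
    obtain ⟨j, hj, hposj⟩ :=
      exists_inner_simple_pos (R := R) hc0 (mt ofCoords_eq_zero_iff.2 (R.root_ne_zero _ hc))
    have hrest : 0 ≤ ⟪R.ofCoords c, R.ofCoords (b - Pi.single j 1)⟫ := by
      have hle : Pi.single j 1 ≤ b := single_le_of_mem_supp hb0 (hcb hj)
      refine inner_ofCoords_nonneg (sub_nonneg.2 hle) fun i hi => ?_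
      refine hcdom i (mem_supp.2 fun hbi => ?_)
      have hij : i ≠ j := fun h => mem_supp.1 (hcb hj) (h ▸ hbi)
      exact mem_supp.1 hi (by simp [hbi, hij])
    rw [map_sub, ofCoords_single, inner_sub_right] at hrest
    linarith
  have hpair := cpair_mul_inner_self (R.root_ne_zero _ hb) (R.ofCoords c)
  rw [cpair_eq_one hb hc hnorm.le hne hpos, one_mul] at hpair
  have hmem := (sub_mem_roots hb hc hnorm.le hne hpos).1
  rw [← map_sub] at hmem
  rcases nonneg_or_nonpos_of_ofCoords_mem_roots hmem with hsub | hsub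
  · have hge : 0 ≤ ⟪R.ofCoords b, R.ofCoords (c - b)⟫ := by
      refine inner_ofCoords_nonneg hsub fun i hi => hbdom i (mem_supp.2 fun hbi => ?_)
      have hci : c i = 0 := by
        by_contra hci
        exact mem_supp.1 (hcb (mem_supp.2 hci)) hbi
      exact mem_supp.1 hi (by rw [Pi.sub_apply, hbi, hci, sub_zero])
    rw [map_sub, inner_sub_right, real_inner_comm] at hge
    linarith [inner_self_pos hb]
  · exact sub_nonpos.1 hsub

theorem le_of_supp_subset {b c : Fin ℓ → ℤ} (hb0 : 0 ≤ b) (hb : R.ofCoords b ∈ R.roots)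
    (hshort : ∀ j ∈ supp b, ⟪R.ofCoords b, R.ofCoords b⟫ ≤ ⟪R.simple j, R.simple j⟫)
    (hbdom : ∀ j ∈ supp b, 0 ≤ ⟪R.ofCoords b, R.simple j⟫)
    (hc0 : 0 ≤ c) (hc : R.ofCoords c ∈ R.roots) (hcb : supp c ⊆ supp b)
    (hnorm : ⟪R.ofCoords c, R.ofCoords c⟫ = ⟪R.ofCoords b, R.ofCoords b⟫) : c ≤ b := by
  let S : Set (Fin ℓ → ℤ) := {d | R.ofCoords d ∈ R.roots ∧ 0 ≤ d ∧ supp d ⊆ supp b ∧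
    ⟪R.ofCoords d, R.ofCoords d⟫ = ⟪R.ofCoords b, R.ofCoords b⟫}
  have hS : S.Finite := (R.roots.finite_toSet.preimage R.ofCoords_injective.injOn).subset
    fun d hd => hd.1
  obtain ⟨d, hcd, ⟨hd, hd0, hdb, hdnorm⟩, hmax⟩ := hS.exists_le_maximal ⟨hc, hc0, hcb, hnorm⟩
  refine hcd.trans (le_of_inner_simple_nonneg hb0 hb hd0 hd hdb hdnorm hbdom fun j hj => ?_)
  by_contra! hneg
  obtain ⟨hmem, hnorm'⟩ := add_mem_roots (R.simple_mem j) hd (hdnorm.trans_le (hshort j hj))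
    (ofCoords_ne_neg_simple hd0 j) hneg
  rw [← ofCoords_single, ← map_add] at hmem hnorm'
  have hsupp : supp (d + Pi.single j 1) ⊆ supp b := fun i hi => by
    obtain rfl | hij := eq_or_ne i j
    · exact hj
    · exact hdb (by simpa [mem_supp, hij] using hi)
  have hle := hmax
    ⟨hmem, add_nonneg hd0 (Pi.single_nonneg.2 zero_le_one), hsupp, hnorm'.trans hdnorm⟩
    (le_add_of_nonneg_right (Pi.single_nonneg.2 zero_le_one)) j
  simp at hle

theorem isRootOf_ofCoords_iff {I : Finset (Fin ℓ)} {c : Fin ℓ → ℤ} :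
    R.IsRootOf I (R.ofCoords c) ↔ R.ofCoords c ∈ R.roots ∧ supp c ⊆ I := by
  refine and_congr_right fun _ => ⟨?_, fun h => ?_⟩
  · rintro ⟨d, hdI, hd⟩ i hi
    rw [← ofCoords_apply] at hd
    exact hdI i (R.ofCoords_injective hd ▸ mem_supp.1 hi)
  · exact ⟨c, fun i hi => h (mem_supp.2 hi), ofCoords_apply c⟩

theorem isHighestShortRoot_supp {b : Fin ℓ → ℤ} (hb0 : 0 ≤ b) (hb : R.ofCoords b ∈ R.roots)
    (hshort : ∀ j ∈ supp b, ⟪R.ofCoords b, R.ofCoords b⟫ ≤ ⟪R.simple j, R.simple j⟫)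
    (hbdom : ∀ j ∈ supp b, 0 ≤ ⟪R.ofCoords b, R.simple j⟫) :
    R.IsHighestShortRoot (supp b) (R.ofCoords b) := by
  have hroot : R.IsRootOf (supp b) (R.ofCoords b) := isRootOf_ofCoords_iff.2 ⟨hb, subset_rfl⟩
  have hmin_pos : ∀ c, 0 ≤ c → R.ofCoords c ∈ R.roots → supp c ⊆ supp b →
      ⟪R.ofCoords b, R.ofCoords b⟫ ≤ ⟪R.ofCoords c, R.ofCoords c⟫ := by
    intro c hc0 hc hcb
    obtain ⟨j, hj, hle⟩ := exists_inner_simple_self_le hc0 hc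
    exact (hshort j (hcb hj)).trans hle
  have hmin : ∀ γ, R.IsRootOf (supp b) γ → ⟪R.ofCoords b, R.ofCoords b⟫ ≤ ⟪γ, γ⟫ := by
    intro γ hγ
    obtain ⟨c, rfl, hc0 | hc0⟩ := exists_ofCoords_eq hγ.1
    · exact hmin_pos c hc0 hγ.1 (isRootOf_ofCoords_iff.1 hγ).2
    · have hsupp : supp (-c) = supp c := by ext i; simp [mem_supp]
      have hneg := hmin_pos (-c) (neg_nonneg.2 hc0) (by rw [map_neg]; exact neg_mem_roots hγ.1)
        (hsupp ▸ (isRootOf_ofCoords_iff.1 hγ).2)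
      rwa [map_neg, inner_neg_neg] at hneg
  refine ⟨⟨hroot, hmin⟩, fun γ hγ => ?_⟩
  obtain ⟨c, rfl, hc0 | hc0⟩ := exists_ofCoords_eq hγ.1.1
  · exact wle_ofCoords_iff.2 <| le_of_supp_subset hb0 hb hshort hbdom hc0 hγ.1.1
      (isRootOf_ofCoords_iff.1 hγ.1).2 ((hγ.2 _ hroot).antisymm (hmin _ hγ.1))
  · exact wle_ofCoords_iff.2 (hc0.trans hb0)

/-! ### Type `G₂` -/

theorem two_mul_inner_simple_le {i j : Fin ℓ} (hij : i ≠ j)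
    (hne : ⟪R.simple i, R.simple j⟫ ≠ 0) :
    2 * ⟪R.simple i, R.simple j⟫ ≤ -⟪R.simple j, R.simple j⟫ := by
  have hle := inner_self_le_two_mul_inner (x := -R.simple i)
    (neg_mem (mem_weightLattice_of_mem_roots (R.simple_mem i))) (R.simple_mem j)
    (by rw [inner_neg_left, neg_pos]; exact (inner_simple_nonpos hij).lt_of_ne hne)
  rw [inner_neg_left] at hle
  linarith

theorem inner_simple_eq_zero_of_two_le {c : Fin ℓ → ℤ} (hc : 0 ≤ c) {i m : Fin ℓ} (hci : 2 ≤ c i)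
    (hcm : c m = 0) (hnorm : ⟪R.ofCoords c, R.ofCoords c⟫ ≤ ⟪R.simple i, R.simple i⟫) :
    ⟪R.simple i, R.simple m⟫ = 0 := by
  by_contra hne
  have him : i ≠ m := by rintro rfl; omega
  have hle_m := two_mul_inner_simple_le him hne
  have hle_i := two_mul_inner_simple_le him.symm (real_inner_comm (R.simple i) _ ▸ hne)
  rw [real_inner_comm] at hle_i
  have hle_c : ⟪R.ofCoords c, R.simple m⟫ ≤ 2 * ⟪R.simple i, R.simple m⟫ := by
    have hanti := inner_ofCoords_simple_anti (R := R) (b := c) (c := (2 : ℤ) • Pi.single i 1)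
      (j := m) ?_ (by simp [him.symm, hcm])
    · simpa only [map_smul, ofCoords_single, ← Int.cast_smul_eq_zsmul ℝ, Int.cast_ofNat,
        real_inner_smul_left]
        using hanti
    · intro j
      obtain rfl | hj := eq_or_ne j i
      · simpa using hci
      · simpa [hj] using hc j
  have hsum_ne : c + Pi.single m 1 ≠ 0 := Function.ne_iff.2 ⟨m, by simp [hcm]⟩
  have hsum_pos := real_inner_self_pos.2 (mt (ofCoords_eq_zero_iff (R := R)).1 hsum_ne)
  rw [map_add, ofCoords_single, real_inner_add_add_self] at hsum_pos
  linarith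

theorem pair_eq_univ_of_cpair_eq_neg_three {j k : Fin ℓ} (hjk : j ≠ k)
    (h : cpair (R.simple j) (R.simple k) = -3) : ({j, k} : Finset (Fin ℓ)) = Finset.univ := by
  have hpair := cpair_mul_inner_self (R.root_ne_zero _ (R.simple_mem k)) (R.simple j)
  rw [h] at hpair
  have hNk := inner_self_pos (R.simple_mem k)
  have hNj : ⟪R.simple j, R.simple j⟫ ≤ 3 * ⟪R.simple k, R.simple k⟫ := by
    have hne : ⟪R.simple k, R.simple j⟫ ≠ 0 := by rw [real_inner_comm]; linarith
    have hle := two_mul_inner_simple_le hjk.symm hne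
    rw [real_inner_comm] at hle
    linarith
  have hnorm (s t : ℤ) : ⟪R.ofCoords (s • Pi.single j 1 + t • Pi.single k 1),
      R.ofCoords (s • Pi.single j 1 + t • Pi.single k 1)⟫ =
      s ^ 2 * ⟪R.simple j, R.simple j⟫ + (t ^ 2 - 3 * s * t) * ⟪R.simple k, R.simple k⟫ := by
    simp only [map_add, map_smul, ofCoords_single, ← Int.cast_smul_eq_zsmul ℝ,
      real_inner_add_add_self, real_inner_smul_left, real_inner_smul_right]
    linear_combination -(s * t : ℝ) * hpair
  have hnonneg {s t : ℤ} (hs : 0 ≤ s) (ht : 0 ≤ t) :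
      (0 : Fin ℓ → ℤ) ≤ s • Pi.single j 1 + t • Pi.single k 1 :=
    add_nonneg (smul_nonneg hs (Pi.single_nonneg.2 zero_le_one))
      (smul_nonneg ht (Pi.single_nonneg.2 zero_le_one))
  refine R.irred _ (Finset.insert_nonempty j {k}) fun i hi m hm => ?_
  rw [Finset.mem_insert, Finset.mem_singleton, not_or] at hm
  -- `2αⱼ + 3αₖ` and `αⱼ + 2αₖ`: the highest root and the highest short root of `G₂`.
  rcases Finset.mem_insert.1 hi with rfl | hi
  · refine inner_simple_eq_zero_of_two_le (hnonneg (s := 2) (t := 3) (by norm_num) (by norm_num))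
      (by simp [hjk]) (by simp [hm]) ?_
    rw [hnorm]
    push_cast
    linarith
  · obtain rfl := Finset.mem_singleton.1 hi
    refine inner_simple_eq_zero_of_two_le (hnonneg (s := 1) (t := 2) (by norm_num) (by norm_num))
      (by simp [hjk.symm]) (by simp [hm]) ?_
    rw [hnorm]
    push_cast
    linarith

theorem cpair_simple_eq_zero_or_le_neg_two {j k : Fin ℓ} (hjk : j ≠ k)
    (hlt : ⟪R.simple k, R.simple k⟫ < ⟪R.simple j, R.simple j⟫) :
    cpair (R.simple j) (R.simple k) = 0 ∨ cpair (R.simple j) (R.simple k) ≤ -2 := by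
  obtain ⟨n, hn⟩ := R.cpair_int _ (R.simple_mem k) _ (R.simple_mem j)
  have hpair := cpair_mul_inner_self (R.root_ne_zero _ (R.simple_mem k)) (R.simple j)
  by_cases horth : ⟪R.simple k, R.simple j⟫ = 0
  · exact .inl (by rw [cpair, real_inner_comm, horth, mul_zero, zero_div])
  have hle := two_mul_inner_simple_le hjk.symm horth
  rw [real_inner_comm, ← hpair, hn] at hle
  have hn1 : (n : ℝ) < -1 := by
    by_contra! hge
    nlinarith [inner_self_pos (R.simple_mem k)]
  rw [hn]
  norm_cast at hn1 ⊢
  omega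

theorem exists_cpair_eq_neg_three {b : Fin ℓ → ℤ} (hb0 : 0 ≤ b) (hb : R.ofCoords b ∈ R.roots)
    {k : Fin ℓ} (hbk : b k = 1) (hle : ⟪R.ofCoords b, R.ofCoords b⟫ ≤ ⟪R.simple k, R.simple k⟫)
    (hshort : ∀ j ∈ supp b, j ≠ k → ⟪R.simple k, R.simple k⟫ < ⟪R.simple j, R.simple j⟫)
    (hneg : ⟪R.ofCoords b, R.simple k⟫ < 0) :
    ∃ j, j ≠ k ∧ b j = 1 ∧ cpair (R.simple j) (R.simple k) = -3 := by
  choose n hn using fun j => R.cpair_int _ (R.simple_mem k) _ (R.simple_mem j)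
  have hsum : ∑ j, b j * n j = -1 := by
    have hpair : cpair (R.ofCoords b) (R.simple k) = -1 :=
      cpair_eq_neg_one (R.simple_mem k) hb hle (ofCoords_ne_neg_simple hb0 k) hneg
    simp only [cpair_ofCoords, hn] at hpair
    exact_mod_cast hpair
  have hnk : n k = 2 := by
    have hself := cpair_self (R.root_ne_zero _ (R.simple_mem k))
    rw [hn] at hself
    exact_mod_cast hself
  have hn_le (j : Fin ℓ) (hj : j ∈ Finset.univ.erase k) (hbj : b j ≠ 0) :
      n j = 0 ∨ n j ≤ -2 := by
    have hjk := Finset.ne_of_mem_erase hj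
    have hcases := cpair_simple_eq_zero_or_le_neg_two hjk (hshort j (mem_supp.2 hbj) hjk)
    rw [hn] at hcases
    exact_mod_cast hcases
  rw [← Finset.add_sum_erase _ _ (Finset.mem_univ k), hbk, hnk] at hsum
  obtain ⟨j, hj, hbj, hnj⟩ :=
    exists_eq_one_and_eq_neg_three_of_sum_mul (fun j _ => hb0 j) hn_le (by omega)
  exact ⟨j, Finset.ne_of_mem_erase hj, hbj, by rw [hn, hnj]; norm_num⟩

theorem ofCoords_eq_sum_simple {b : Fin ℓ → ℤ} (hb0 : 0 ≤ b) (hb : R.ofCoords b ∈ R.roots)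
    {k : Fin ℓ} (hbk : b k = 1) (hle : ⟪R.ofCoords b, R.ofCoords b⟫ ≤ ⟪R.simple k, R.simple k⟫)
    (hshort : ∀ j ∈ supp b, j ≠ k → ⟪R.simple k, R.simple k⟫ < ⟪R.simple j, R.simple j⟫)
    (hneg : ⟪R.ofCoords b, R.simple k⟫ < 0) : ℓ = 2 ∧ R.ofCoords b = ∑ i, R.simple i := by
  obtain ⟨j, hjk, hbj, h3⟩ := exists_cpair_eq_neg_three hb0 hb hbk hle hshort hneg
  have huniv := pair_eq_univ_of_cpair_eq_neg_three hjk h3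
  constructor
  · rw [← Finset.card_fin ℓ, ← huniv, Finset.card_pair hjk]
  · rw [ofCoords_apply, ← huniv, Finset.sum_pair hjk, Finset.sum_pair hjk, hbj, hbk, Int.cast_one,
      one_smul, one_smul]

theorem Covers.exists_isHighestShortRoot_or {lam μ : E} (h : R.Covers lam μ) :
    ∃ I, R.Connected I ∧
      (R.IsHighestShortRoot I (lam - μ) ∨ (ℓ = 2 ∧ lam - μ = ∑ i, R.simple i)) := by
  obtain ⟨b, hb0, hb⟩ := wle_iff.1 h.2.2.1
  obtain rfl : lam = μ + R.ofCoords b := eq_add_of_sub_eq' hb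
  rw [add_sub_cancel_left]
  have hconn := h.connected_supp
  obtain ⟨k, hk, hkmin⟩ :=
    Finset.exists_min_image (supp b) (fun j => ⟪R.simple j, R.simple j⟫) hconn.1
  obtain ⟨hroot, hnorm, hμ⟩ := h.ofCoords_mem_roots hk hkmin
  refine ⟨supp b, hconn, or_iff_not_imp_left.2 fun hnot => ?_⟩
  obtain ⟨i, hi, hneg⟩ : ∃ i ∈ supp b, ⟪R.ofCoords b, R.simple i⟫ < 0 := by
    by_contra! hbdom
    exact hnot (isHighestShortRoot_supp hb0 hroot (fun j hj => hnorm.trans_le (hkmin j hj)) hbdom)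
  have hμi : ⟪μ, R.simple i⟫ ≠ 0 := fun h0 => by
    have hlam := h.1.inner_simple_nonneg i
    rw [inner_add_left, h0, zero_add] at hlam
    exact hneg.not_ge hlam
  have hbi (j : Fin ℓ) (hj : j ∈ supp b)
      (hjmin : ∀ m ∈ supp b, ⟪R.simple j, R.simple j⟫ ≤ ⟪R.simple m, R.simple m⟫) :
      i = j ∧ b i = 1 := by
    have hsingle := (h.ofCoords_mem_roots hj hjmin).2.2 i hμi
    by_cases hij : i = j
    · exact ⟨hij, by rw [hsingle, hij, Pi.single_eq_same]⟩
    · rw [Pi.single_eq_of_ne hij] at hsingle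
      exact absurd hsingle (mem_supp.1 hi)
  obtain ⟨rfl, hbi1⟩ := hbi k hk hkmin
  refine ofCoords_eq_sum_simple hb0 hroot hbi1 hnorm.le (fun j hj hji => ?_) hneg
  by_contra! hle
  exact hji (hbi j hj fun m hm => hle.trans (hkmin m hm)).1.symm

end RootSystemData

/-- If `λ` is a nonzero dominant weight which is not minuscule, then there is an
irreducible subset `I` with `λ - θ_I` dominant (in G₂ one may also use
`α₁ + α₂`); consequently `λ` covers some dominant weight. -/
theorem statement18 (R : RootSystemData ℓ E) (lam : E)
    (hdom : R.IsDominant lam) (hne : lam ≠ 0) (hnm : ¬ R.IsMinuscule lam) :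
    (∃ (I : Finset (Fin ℓ)) (θ : E), R.Connected I ∧
      (R.IsHighestShortRoot I θ ∨ (ℓ = 2 ∧ θ = ∑ i, R.simple i)) ∧
      R.IsDominant (lam - θ)) ∧
    ∃ μ : E, R.IsDominant μ ∧ R.Covers lam μ := by
  obtain ⟨b, hb, hbdom⟩ := RootSystemData.exists_isDominant_sub hdom hne hnm
  obtain ⟨μ, hcov⟩ := RootSystemData.exists_covers hdom hb hbdom
  obtain ⟨I, hI, hθ⟩ := hcov.exists_isHighestShortRoot_or
  exact ⟨⟨I, lam - μ, hI, hθ, by rw [sub_sub_cancel]; exact hcov.2.1⟩, μ, hcov.2.1, hcov⟩
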